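/- arXiv:2207.05694 — 2 statements merged into one kernel-verified Lean document; each statement's English description precedes it below -/
import Mathlib

section
/- Let x, y be probability vectors of dimension d, sorted in nonincreasing order, with strictly positive entries. Then there exists a probability vector c with strictly positive entries such that P(x⊗c → y⊗c) > P(x → y), if and only if P(x → y) < min{x_{d−1}/y_{d−1}, 1}, where x_{d−1} and y_{d−1} are the smallest entries of x and y. -/
/-- The sum of the `k` largest entries of a vector (equivalently, for vectors with
nonnegative entries, the maximum of `∑ i ∈ s, x i` over subsets `s` of cardinality at
most `k`; this also accounts for padding with zeros). -/
noncomputable def topSum {ι : Type*} [Fintype ι] [DecidableEq ι] (x : ι → ℝ) (k : ℕ) : ℝ :=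
  ((Finset.univ : Finset ι).powerset.filter (fun s => s.card ≤ k)).sup'
    ⟨∅, by simp⟩ (fun s => ∑ i ∈ s, x i)

/-- A probability vector: nonnegative entries summing to 1. -/
def IsProbVec {ι : Type*} [Fintype ι] (x : ι → ℝ) : Prop :=
  (∀ i, 0 ≤ x i) ∧ ∑ i, x i = 1

/-- `x ≺ y` (majorization, after padding with zeros to a common dimension): every partial
sum of the `k` largest entries of `x` is at most that of `y`, with equal total sums. -/
def PMaj {ι κ : Type*} [Fintype ι] [DecidableEq ι] [Fintype κ] [DecidableEq κ]
    (x : ι → ℝ) (y : κ → ℝ) : Prop :=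
  (∀ k : ℕ, topSum x k ≤ topSum y k) ∧ (∑ i, x i = ∑ j, y j)

/-- Tensor product of two vectors: `(x ⊗ y)_{(i,j)} = x_i y_j`. -/
def pvTensor {ι κ : Type*} (x : ι → ℝ) (y : κ → ℝ) : ι × κ → ℝ :=
  fun p => x p.1 * y p.2

/-- The optimal conversion probability
`P(v → w) = min_{0 ≤ n ≤ D-1} (∑_{i=n}^{D-1} v↓_i) / (∑_{i=n}^{D-1} w↓_i)`,
where the tail sum of the `D - n` smallest entries is the total sum minus the sum of the
`n` largest entries. -/
noncomputable def Pconv {ι : Type*} [Fintype ι] [DecidableEq ι] [Nonempty ι]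
    (v w : ι → ℝ) : ℝ :=
  (Finset.range (Fintype.card ι)).inf' (Finset.nonempty_range_iff.mpr Fintype.card_ne_zero)
    (fun n => (∑ i, v i - topSum v n) / (∑ i, w i - topSum w n))

/-! Every set of entries of `x` outweighs `P(x → y)` times the sum of equally many smallest entries
of `y`. Applied to the slices `c j • y` of `y ⊗ c`, this shows that a catalyst fails only if some
nonempty set of smallest entries of `y ⊗ c` has all of its slices tight, i.e. attaining `P(x → y)`.
Under the two strict inequalities a nonempty tight set contains an entry of `y` above the
minimum, and the full set is not tight. For `c` geometric with ratio close to `1`, an entry of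
slice `j + 1` above its minimum exceeds the minimum of slice `j`, so slice `j` meets the set as soon
as slice `j + 1` does, down to slice `0`. If `c` is long enough, the whole of its last slice
lies below slice `0` and must therefore be full: a contradiction. -/

section Catalyst

open Finset Filter Topology

variable {ι κ : Type*}

/-- The set `u` carries the `#u` smallest entries of `x`. This is encoded as minimality of the sum,
so that no sorting or tie-breaking is involved. -/
def IsBottomSet (x : ι → ℝ) (u : Finset ι) : Prop :=
  ∀ v : Finset ι, #v = #u → ∑ i ∈ u, x i ≤ ∑ i ∈ v, x i

theorem isBottomSet_singleton {x : ι → ℝ} {a : ι} (ha : ∀ i, x a ≤ x i) : IsBottomSet x {a} := by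
  intro v hv
  obtain ⟨i, rfl⟩ := card_eq_one.mp (hv.trans (card_singleton a))
  simpa only [sum_singleton] using ha i

theorem isBottomSet_univ [Fintype ι] (x : ι → ℝ) : IsBottomSet x univ := by
  intro v hv
  rw [(card_eq_iff_eq_univ v).mp hv]

theorem IsBottomSet.apply_le {x : ι → ℝ} {u : Finset ι} (hu : IsBottomSet x u) {p q : ι}
    (hp : p ∈ u) (hq : q ∉ u) : x p ≤ x q := by
  classical
  have hq' : q ∉ u.erase p := fun h => hq (mem_of_mem_erase h)
  have hswap := hu (insert q (u.erase p)) (by rw [card_insert_of_notMem hq', card_erase_add_one hp])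
  rw [sum_insert hq', ← add_sum_erase u x hp] at hswap
  exact le_of_add_le_add_right hswap

theorem exists_isBottomSet_card_eq [Fintype ι] (x : ι → ℝ) {m : ℕ} (hm : m ≤ Fintype.card ι) :
    ∃ u, IsBottomSet x u ∧ #u = m := by
  obtain ⟨u, hu, hmin⟩ := exists_min_image (powersetCard m univ) (fun u => ∑ i ∈ u, x i)
    (powersetCard_nonempty.mpr hm)
  obtain ⟨-, hcard⟩ := mem_powersetCard.mp hu
  exact ⟨u, fun v hv => hmin v (mem_powersetCard.mpr ⟨subset_univ v, hv.trans hcard⟩), hcard⟩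

section ConversionProbability

variable [Fintype ι] [DecidableEq ι]

theorem IsBottomSet.sum_eq_sum_sub_topSum {x : ι → ℝ} {u : Finset ι} (hu : IsBottomSet x u)
    (hx : ∀ i, 0 ≤ x i) {n : ℕ} (hn : #u + n = Fintype.card ι) :
    ∑ i ∈ u, x i = ∑ i, x i - topSum x n := by
  have hle : topSum x n ≤ ∑ i, x i - ∑ i ∈ u, x i := by
    refine sup'_le _ _ fun s hs => ?_
    replace hs : #s ≤ n := (mem_filter.mp hs).2
    have hcompl := card_add_card_compl s
    obtain ⟨w, hw, hcard⟩ := exists_subset_card_eq (show #u ≤ #sᶜ by omega)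
    have huw := hu w hcard
    have hws := sum_le_sum_of_subset_of_nonneg hw fun i _ _ => hx i
    have hsum := sum_add_sum_compl s x
    linarith
  have hge : ∑ i ∈ uᶜ, x i ≤ topSum x n :=
    le_sup' (fun s => ∑ i ∈ s, x i) <|
      mem_filter.mpr ⟨mem_powerset.mpr (subset_univ _), by rw [card_compl]; omega⟩
  have hsum := sum_add_sum_compl u x
  linarith

variable [Nonempty ι]

theorem Pconv_mul_sum_le {x y : ι → ℝ} (hx : ∀ i, 0 ≤ x i) (hy : ∀ i, 0 < y i) (s : Finset ι)
    {t : Finset ι} (ht : IsBottomSet y t) (hst : #s = #t) :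
    Pconv x y * ∑ i ∈ t, y i ≤ ∑ i ∈ s, x i := by
  rcases t.eq_empty_or_nonempty with rfl | hne
  · simp [card_eq_zero.mp hst]
  have hle := t.card_le_univ
  have hpos := hne.card_pos
  obtain ⟨r, hr, hrt⟩ := exists_isBottomSet_card_eq x hle
  calc Pconv x y * ∑ i ∈ t, y i
    _ ≤ ∑ i ∈ r, x i := by
      rw [← le_div_iff₀ (sum_pos (fun i _ => hy i) hne),
        hr.sum_eq_sum_sub_topSum hx (n := Fintype.card ι - #t) (by omega),
        ht.sum_eq_sum_sub_topSum (fun i => (hy i).le) (n := Fintype.card ι - #t) (by omega)]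
      exact inf'_le _ (mem_range.mpr (by omega))
    _ ≤ ∑ i ∈ s, x i := hr s (hst.trans hrt.symm)

theorem exists_Pconv_eq_sum_div_sum {x y : ι → ℝ} (hx : ∀ i, 0 ≤ x i) (hy : ∀ i, 0 ≤ y i) :
    ∃ s t : Finset ι, IsBottomSet y t ∧ t.Nonempty ∧ #s = #t ∧
      Pconv x y = (∑ i ∈ s, x i) / ∑ i ∈ t, y i := by
  obtain ⟨n, hn, heq⟩ := exists_mem_eq_inf'
    (nonempty_range_iff.mpr (Fintype.card_ne_zero (α := ι)))
    (fun n => (∑ i, x i - topSum x n) / (∑ i, y i - topSum y n))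
  replace hn := mem_range.mp hn
  obtain ⟨s, hs, hsn⟩ := exists_isBottomSet_card_eq x (Nat.sub_le (Fintype.card ι) n)
  obtain ⟨t, ht, htn⟩ := exists_isBottomSet_card_eq y (Nat.sub_le (Fintype.card ι) n)
  refine ⟨s, t, ht, card_pos.mp (by omega), hsn.trans htn.symm, ?_⟩
  rw [hs.sum_eq_sum_sub_topSum hx (n := n) (by omega),
    ht.sum_eq_sum_sub_topSum hy (n := n) (by omega)]
  exact heq

theorem Pconv_nonneg {x y : ι → ℝ} (hx : ∀ i, 0 ≤ x i) (hy : ∀ i, 0 ≤ y i) : 0 ≤ Pconv x y := by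
  obtain ⟨s, t, -, -, -, heq⟩ := exists_Pconv_eq_sum_div_sum hx hy
  rw [heq]
  exact div_nonneg (sum_nonneg fun i _ => hx i) (sum_nonneg fun i _ => hy i)

theorem Pconv_pos {x y : ι → ℝ} (hx : ∀ i, 0 < x i) (hy : ∀ i, 0 < y i) : 0 < Pconv x y := by
  obtain ⟨s, t, -, hne, hst, heq⟩ :=
    exists_Pconv_eq_sum_div_sum (fun i => (hx i).le) fun i => (hy i).le
  have hne' : s.Nonempty := card_pos.mp (hst ▸ hne.card_pos)
  rw [heq]
  exact div_pos (sum_pos (fun i _ => hx i) hne') (sum_pos (fun i _ => hy i) hne)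

/-- The set `t` of entries of `y`, matched with equally many entries of `x`, attains the minimum
defining `Pconv x y`. The equation is stated without division so that `∅` counts as tight. -/
def IsTight (x y : ι → ℝ) (t : Finset ι) : Prop :=
  ∃ s : Finset ι, #s = #t ∧ ∑ i ∈ s, x i = Pconv x y * ∑ i ∈ t, y i

theorem IsTight.exists_lt {x y : ι → ℝ} {t : Finset ι} (ht : IsTight x y t) (hne : t.Nonempty)
    {l m : ℝ} (hl : ∀ i, l ≤ x i) (hP : 0 ≤ Pconv x y) (hlt : Pconv x y * m < l) :
    ∃ i ∈ t, m < y i := by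
  obtain ⟨s, hst, heq⟩ := ht
  by_contra! hle
  refine lt_irrefl (∑ i ∈ s, x i) ?_
  calc ∑ i ∈ s, x i
    _ = Pconv x y * ∑ i ∈ t, y i := heq
    _ ≤ Pconv x y * (#t • m) := mul_le_mul_of_nonneg_left (sum_le_card_nsmul _ _ _ hle) hP
    _ = #t • (Pconv x y * m) := by simp only [nsmul_eq_mul, mul_left_comm]
    _ < #t • l := nsmul_lt_nsmul_right hne.card_pos.ne' hlt
    _ = #s • l := by rw [hst]
    _ ≤ ∑ i ∈ s, x i := card_nsmul_le_sum _ _ _ fun i _ => hl i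

theorem IsTight.ne_univ {x y : ι → ℝ} {t : Finset ι} (ht : IsTight x y t)
    (hlt : Pconv x y * ∑ i, y i < ∑ i, x i) : t ≠ univ := by
  rintro rfl
  obtain ⟨s, hs, heq⟩ := ht
  rw [(card_eq_iff_eq_univ s).mp hs] at heq
  exact hlt.ne' heq

end ConversionProbability

section Slice

variable [Fintype ι] [DecidableEq ι] [DecidableEq κ]

/-- The `j`-th slice of a set of entries of `x ⊗ c`: its trace on the copy `c j • x` of `x`. -/
def pvSlice (u : Finset (ι × κ)) (j : κ) : Finset ι :=
  univ.filter fun i => (i, j) ∈ u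

theorem mem_pvSlice {u : Finset (ι × κ)} {i : ι} {j : κ} : i ∈ pvSlice u j ↔ (i, j) ∈ u := by
  simp [pvSlice]

theorem exists_pvSlice_eq [Finite κ] (t : κ → Finset ι) :
    ∃ u : Finset (ι × κ), ∀ j, pvSlice u j = t j := by
  cases nonempty_fintype κ
  exact ⟨univ.filter fun p => p.1 ∈ t p.2, fun j => by ext i; simp [mem_pvSlice]⟩

variable [Fintype κ]

theorem sum_eq_sum_pvSlice {M : Type*} [AddCommMonoid M] (u : Finset (ι × κ)) (f : ι × κ → M) :
    ∑ p ∈ u, f p = ∑ j, ∑ i ∈ pvSlice u j, f (i, j) :=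
  sum_finset_product_right u univ (pvSlice u) fun p => by simp [mem_pvSlice]

theorem card_eq_sum_card_pvSlice (u : Finset (ι × κ)) : #u = ∑ j, #(pvSlice u j) := by
  simpa only [card_eq_sum_ones] using sum_eq_sum_pvSlice u fun _ => 1

theorem sum_pvTensor_eq_sum_pvSlice (x : ι → ℝ) (c : κ → ℝ) (u : Finset (ι × κ)) :
    ∑ p ∈ u, pvTensor x c p = ∑ j, (∑ i ∈ pvSlice u j, x i) * c j := by
  simp only [sum_eq_sum_pvSlice u, pvTensor, sum_mul]

end Slice

theorem sum_pvTensor [Fintype ι] [Fintype κ] (x : ι → ℝ) (c : κ → ℝ) :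
    ∑ p, pvTensor x c p = (∑ i, x i) * ∑ j, c j := by
  rw [Fintype.sum_mul_sum, Fintype.sum_prod_type]
  rfl

section Tensor

variable [Fintype ι] [DecidableEq ι] [Nonempty ι] [Fintype κ] [DecidableEq κ] [Nonempty κ]

theorem Pconv_pvTensor_le_min {x y : ι → ℝ} {c : κ → ℝ} (hx : ∀ i, 0 ≤ x i) (hy : ∀ i, 0 < y i)
    (hc : ∀ j, 0 < c j) (a : ι) {b : ι} (hb : ∀ i, y b ≤ y i) :
    Pconv (pvTensor x c) (pvTensor y c) ≤ min (x a / y b) ((∑ i, x i) / ∑ i, y i) := by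
  have hxc : ∀ p, 0 ≤ pvTensor x c p := fun p => mul_nonneg (hx _) (hc _).le
  have hyc : ∀ p, 0 < pvTensor y c p := fun p => mul_pos (hy _) (hc _)
  refine le_min ?_ ?_
  · obtain ⟨j, hj⟩ := Finite.exists_min c
    have hbj : ∀ p, pvTensor y c (b, j) ≤ pvTensor y c p :=
      fun p => mul_le_mul (hb _) (hj _) (hc _).le (hy _).le
    have h := Pconv_mul_sum_le hxc hyc {(a, j)} (isBottomSet_singleton hbj) rfl
    simp only [sum_singleton, pvTensor, ← mul_assoc] at h
    exact (le_div_iff₀ (hy b)).mpr (le_of_mul_le_mul_right h (hc j))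
  · have h := Pconv_mul_sum_le hxc hyc univ (isBottomSet_univ _) rfl
    simp only [sum_pvTensor, ← mul_assoc] at h
    exact (le_div_iff₀ (sum_pos (fun i _ => hy i) univ_nonempty)).mpr
      (le_of_mul_le_mul_right h (sum_pos (fun j _ => hc j) univ_nonempty))

theorem exists_isBottomSet_forall_isTight_pvSlice {x y : ι → ℝ} {c : κ → ℝ} (hx : ∀ i, 0 ≤ x i)
    (hy : ∀ i, 0 < y i) (hc : ∀ j, 0 < c j) (hP : 0 < Pconv x y)
    (hle : Pconv (pvTensor x c) (pvTensor y c) ≤ Pconv x y) :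
    ∃ v, IsBottomSet (pvTensor y c) v ∧ v.Nonempty ∧ ∀ j, IsTight x y (pvSlice v j) := by
  have hyc : ∀ p, 0 < pvTensor y c p := fun p => mul_pos (hy _) (hc _)
  obtain ⟨u, w, hw, hne, huw, heq⟩ := exists_Pconv_eq_sum_div_sum (x := pvTensor x c)
    (fun p => mul_nonneg (hx _) (hc _).le) fun p => (hyc p).le
  rw [heq, div_le_iff₀ (sum_pos (fun p _ => hyc p) hne)] at hle
  choose t ht htcard using fun j => exists_isBottomSet_card_eq y (card_le_univ (pvSlice u j))
  obtain ⟨v, hv⟩ := exists_pvSlice_eq t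
  have hvcard : #v = #w := by
    simp only [← huw, card_eq_sum_card_pvSlice, hv, htcard]
  have hslice : ∀ j ∈ univ,
      (Pconv x y * ∑ i ∈ t j, y i) * c j ≤ (∑ i ∈ pvSlice u j, x i) * c j := fun j _ =>
    mul_le_mul_of_nonneg_right (Pconv_mul_sum_le hx hy _ (ht j) (htcard j).symm) (hc j).le
  have hsum : Pconv x y * ∑ p ∈ v, pvTensor y c p = ∑ j, (Pconv x y * ∑ i ∈ t j, y i) * c j := by
    rw [sum_pvTensor_eq_sum_pvSlice, mul_sum]
    simp only [hv, mul_assoc]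
  have hvu : Pconv x y * ∑ p ∈ v, pvTensor y c p ≤ ∑ p ∈ u, pvTensor x c p := by
    rw [hsum, sum_pvTensor_eq_sum_pvSlice]
    exact sum_le_sum hslice
  have hvw : ∑ p ∈ v, pvTensor y c p = ∑ p ∈ w, pvTensor y c p :=
    le_antisymm (le_of_mul_le_mul_left (hvu.trans hle) hP) (hw v hvcard)
  have huv : ∑ p ∈ u, pvTensor x c p = Pconv x y * ∑ p ∈ v, pvTensor y c p :=
    le_antisymm (hvw ▸ hle) hvu
  rw [hsum, sum_pvTensor_eq_sum_pvSlice] at huv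
  refine ⟨v, fun s hs => hvw.trans_le (hw s (hs.trans hvcard)), ?_, fun j => ⟨pvSlice u j, ?_, ?_⟩⟩
  · exact card_pos.mp (hvcard ▸ hne.card_pos)
  · rw [hv, htcard]
  · rw [hv]
    exact mul_right_cancel₀ (hc j).ne'
      ((sum_eq_sum_iff_of_le hslice).mp huv.symm j (mem_univ j)).symm

end Tensor

section Chain

variable {k : ℕ} {y : ι → ℝ} {m : ℝ} {c : Fin (k + 1) → ℝ}

/-- The scaled copies `c j • y` of a vector `y` with smallest entry `m` form a chain: consecutive
copies overlap, except that entries equal to `m` may fall below the preceding copy, and the whole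
last copy lies below the first. This is the property which makes `c` a catalyst. -/
structure IsOverlappingChain (y : ι → ℝ) (m : ℝ) (c : Fin (k + 1) → ℝ) : Prop where
  overlap : ∀ i, m < y i → ∀ j : Fin k, m * c j.castSucc < y i * c j.succ
  last_lt_first : ∀ i, y i * c (Fin.last k) < m * c 0

theorem IsOverlappingChain.div_const (h : IsOverlappingChain y m c) {r : ℝ} (hr : 0 < r) :
    IsOverlappingChain y m fun j => c j / r where
  overlap i hi j := by
    simpa only [mul_div_assoc] using div_lt_div_of_pos_right (h.overlap i hi j) hr
  last_lt_first i := by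
    simpa only [mul_div_assoc] using div_lt_div_of_pos_right (h.last_lt_first i) hr

theorem IsOverlappingChain.eq_empty_of_isBottomSet [Fintype ι] [DecidableEq ι] {b : ι}
    (h : IsOverlappingChain y (y b) c) (hb : ∀ i, y b ≤ y i) (hc : 0 ≤ c 0)
    {v : Finset (ι × Fin (k + 1))} (hv : IsBottomSet (pvTensor y c) v)
    (hlarge : ∀ j, (pvSlice v j).Nonempty → ∃ i ∈ pvSlice v j, y b < y i)
    (hfull : pvSlice v (Fin.last k) ≠ univ) : v = ∅ := by
  have hswap {i i' : ι} {j j'} (hi : i ∈ pvSlice v j) (hi' : i' ∉ pvSlice v j') :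
      y i * c j ≤ y i' * c j' :=
    hv.apply_le (mem_pvSlice.mp hi) (mt mem_pvSlice.mpr hi')
  have hzero : pvSlice v 0 = ∅ := by
    by_contra! ⟨i, hi⟩
    obtain ⟨i', hi'⟩ : ∃ i', i' ∉ pvSlice v (Fin.last k) := by
      simpa only [ne_eq, eq_univ_iff_forall, not_forall] using hfull
    have hle := mul_le_mul_of_nonneg_right (hb i) hc
    exact ((hswap hi hi').trans_lt (h.last_lt_first i')).not_ge hle
  have hslice (j : Fin (k + 1)) : pvSlice v j = ∅ := by
    induction j using Fin.induction with
    | zero => exact hzero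
    | succ j hj =>
      by_contra! hne
      obtain ⟨i, hi, hbi⟩ := hlarge _ hne
      exact (h.overlap i hbi j).not_ge (hswap hi (hj ▸ notMem_empty b))
  refine eq_empty_of_forall_notMem fun p hp => ?_
  exact notMem_empty p.1 (hslice p.2 ▸ mem_pvSlice.mpr hp)

theorem IsOverlappingChain.Pconv_lt [Fintype ι] [DecidableEq ι] [Nonempty ι] {x : ι → ℝ} {a b : ι}
    (h : IsOverlappingChain y (y b) c) (hx : ∀ i, 0 ≤ x i) (hy : ∀ i, 0 < y i) (hc : ∀ j, 0 < c j)
    (ha : ∀ i, x a ≤ x i) (hb : ∀ i, y b ≤ y i) (hmin : Pconv x y * y b < x a)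
    (hsum : Pconv x y * ∑ i, y i < ∑ i, x i) :
    Pconv x y < Pconv (pvTensor x c) (pvTensor y c) := by
  have hxp (i : ι) : 0 < x i :=
    ((mul_nonneg (Pconv_nonneg hx fun i => (hy i).le) (hy b).le).trans_lt hmin).trans_le (ha i)
  have hP : 0 < Pconv x y := Pconv_pos hxp hy
  by_contra! hle
  obtain ⟨v, hv, hne, htight⟩ := exists_isBottomSet_forall_isTight_pvSlice hx hy hc hP hle
  exact hne.ne_empty <| h.eq_empty_of_isBottomSet hb (hc 0).le hv
    (fun j hj => (htight j).exists_lt hj ha hP.le hmin) ((htight _).ne_univ hsum)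

theorem exists_lt_one_forall_lt_mul [Finite ι] (y : ι → ℝ) (m : ℝ) :
    ∃ α : ℝ, 0 < α ∧ α < 1 ∧ ∀ i, m < y i → m < y i * α := by
  have hnear : ∀ᶠ α : ℝ in 𝓝[<] 1, ∀ i, m < y i → m < y i * α := by
    simp only [eventually_all]
    intro i hi
    have hlim : Tendsto (fun α => y i * α) (𝓝 1) (𝓝 (y i)) := by
      simpa only [mul_one] using (continuous_const_mul (y i)).tendsto 1
    exact nhdsWithin_le_nhds (hlim.eventually_const_lt hi)
  have hpos : ∀ᶠ α : ℝ in 𝓝[<] 1, 0 < α := nhdsWithin_le_nhds (lt_mem_nhds one_pos)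
  obtain ⟨α, hα, hα0, hα1⟩ := (hnear.and (hpos.and self_mem_nhdsWithin)).exists
  exact ⟨α, hα0, hα1, hα⟩

theorem exists_isOverlappingChain_pow [Finite ι] (y : ι → ℝ) (hm : 0 < m) :
    ∃ (α : ℝ) (k : ℕ), 0 < α ∧ IsOverlappingChain y m fun j : Fin (k + 1) => α ^ (j : ℕ) := by
  obtain ⟨α, hα0, hα1, hα⟩ := exists_lt_one_forall_lt_mul y m
  have hlim (i : ι) : Tendsto (fun n => y i * α ^ n) atTop (𝓝 0) := by
    simpa only [mul_zero] using
      (tendsto_pow_atTop_nhds_zero_of_lt_one hα0.le hα1).const_mul (y i)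
  obtain ⟨k, hk⟩ := (eventually_all.mpr fun i => (hlim i).eventually_lt_const hm).exists
  refine ⟨α, k, hα0, fun i hi j => ?_, fun i => ?_⟩
  · calc m * α ^ (j : ℕ)
      _ < y i * α * α ^ (j : ℕ) := mul_lt_mul_of_pos_right (hα i hi) (pow_pos hα0 _)
      _ = y i * α ^ (j + 1 : ℕ) := by ring
  · simpa only [Fin.val_last, Fin.val_zero, pow_zero, mul_one] using hk i

theorem isProbVec_div_sum [Fintype κ] [Nonempty κ] {c : κ → ℝ} (hc : ∀ j, 0 < c j) :
    IsProbVec fun j => c j / ∑ i, c i := by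
  have hS : 0 < ∑ i, c i := sum_pos (fun j _ => hc j) univ_nonempty
  exact ⟨fun j => (div_pos (hc j) hS).le, by rw [← sum_div, div_self hS.ne']⟩

theorem exists_isProbVec_isOverlappingChain [Finite ι] (y : ι → ℝ) (hm : 0 < m) :
    ∃ (k : ℕ) (c : Fin (k + 1) → ℝ), IsProbVec c ∧ (∀ j, 0 < c j) ∧ IsOverlappingChain y m c := by
  obtain ⟨α, k, hα, h⟩ := exists_isOverlappingChain_pow y hm
  have hpos (j : Fin (k + 1)) : 0 < α ^ (j : ℕ) := pow_pos hα _
  have hS : 0 < ∑ j : Fin (k + 1), α ^ (j : ℕ) := sum_pos (fun j _ => hpos j) univ_nonempty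
  exact ⟨k, _, isProbVec_div_sum hpos, fun j => div_pos (hpos j) hS, h.div_const hS⟩

end Chain

theorem catalyst_enhances_probability_iff_general [Fintype ι] [DecidableEq ι] [Nonempty ι]
    (x y : ι → ℝ) (hx : ∀ i, 0 ≤ x i) (hy : ∀ i, 0 < y i) {a b : ι} (ha : ∀ i, x a ≤ x i)
    (hb : ∀ i, y b ≤ y i) :
    (∃ (k : ℕ) (c : Fin (k + 1) → ℝ), IsProbVec c ∧ (∀ j, 0 < c j) ∧
        Pconv x y < Pconv (pvTensor x c) (pvTensor y c)) ↔
      Pconv x y < min (x a / y b) ((∑ i, x i) / ∑ i, y i) := by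
  constructor
  · rintro ⟨k, c, -, hc, hlt⟩
    exact hlt.trans_le (Pconv_pvTensor_le_min hx hy hc a hb)
  · intro hlt
    obtain ⟨hmin, hsum⟩ := lt_min_iff.mp hlt
    rw [lt_div_iff₀ (hy b)] at hmin
    rw [lt_div_iff₀ (sum_pos (fun i _ => hy i) univ_nonempty)] at hsum
    obtain ⟨k, c, hprob, hc, hchain⟩ := exists_isProbVec_isOverlappingChain y (hy b)
    exact ⟨k, c, hprob, hc, hchain.Pconv_lt hx hy hc ha hb hmin hsum⟩

end Catalyst

/-- Feng–Duan–Ying: there exists a (strictly positive) catalyst `c` strictly increasing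
the optimal conversion probability iff `P(x → y) < min{x_{d-1}/y_{d-1}, 1}`. -/
theorem catalyst_enhances_probability_iff {d : ℕ} (x y : Fin (d + 1) → ℝ)
    (hx : IsProbVec x) (hy : IsProbVec y) (hxa : Antitone x) (hya : Antitone y)
    (hxp : ∀ i, 0 < x i) (hyp : ∀ i, 0 < y i) :
    (∃ (k : ℕ) (c : Fin (k + 1) → ℝ), IsProbVec c ∧ (∀ j, 0 < c j) ∧
        Pconv x y < Pconv (pvTensor x c) (pvTensor y c)) ↔
      Pconv x y < min (x (Fin.last d) / y (Fin.last d)) 1 := by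
  simpa only [hx.2, hy.2, div_one] using catalyst_enhances_probability_iff_general x y hx.1 hyp
    (fun i => hxa (Fin.le_last i)) fun i => hya (Fin.le_last i)
end

section
/- Let x, y be probability vectors of dimension d, sorted in nonincreasing order, with strictly positive entries and ¬(x ≺ y), and let t be a probability vector of dimension r with strictly positive entries such that x⊗t ≺ y⊗t. Then log₂C_d(x) > log₂C_d(y) and r ≥ 1 + ((d−1)/d)·(log₂C_{d−1}(y) − log₂C_{d−1}(x))/(log₂C_d(x) − log₂C_d(y)), where for a probability vector v of dimension d, C_k(v) = (e_k(v)/e_k(u_d))^{1/k}, e_k is the k-th elementary symmetric polynomial in the entries, and u_d is the uniform probability vector (1/d,…,1/d). -/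
/-- The `k`-th elementary symmetric polynomial of the entries of a vector. -/
def esymFn {ι : Type*} [Fintype ι] [DecidableEq ι] (k : ℕ) (v : ι → ℝ) : ℝ :=
  ∑ s ∈ Finset.powersetCard k (Finset.univ : Finset ι), ∏ i ∈ s, v i

/-- The generalized `k`-th concurrence `C_k(v) = (e_k(v) / e_k(u_d))^(1/k)`,
where `u_d` is the uniform probability vector. -/
noncomputable def concFn {ι : Type*} [Fintype ι] [DecidableEq ι] (k : ℕ) (v : ι → ℝ) : ℝ :=
  (esymFn k v / esymFn k (fun _ : ι => 1 / (Fintype.card ι : ℝ))) ^ ((1 : ℝ) / k)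

/-!
Each elementary symmetric polynomial `e_k` is Schur-concave: for similarly ordered `v ≺ w`, its
derivative along the segment from `w` to `v` pairs `v - w` with the `e_{k-1}` of the remaining
entries, which are ordered oppositely to the entries themselves, and such a pairing is nonnegative.
For `x ⊗ t ≺ y ⊗ t` this is used in the top two degrees `N = dr` and `N - 1`, where
`e_N(x ⊗ t) = e_d(x)^r e_r(t)^d` and
`e_{N-1}(x ⊗ t) = e_d(x)^{r-1} e_{d-1}(x) · e_r(t)^{d-1} e_{r-1}(t)`. The factors of `t` cancel,
and degree `N - 1` leaves `e_d(y)^{r-1} e_{d-1}(y) ≤ e_d(x)^{r-1} e_{d-1}(x)`, the logarithm of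
which is the bound. Degree `N` gives `e_d(y) < e_d(x)`, strictly, since `e_N` is strictly
Schur-concave at positive vectors and `x ⊗ t` is not a permutation of `y ⊗ t`: otherwise
`x` and `y` would have the same power sums, hence the same entries.
-/

section TopSum

variable {ι κ : Type*} [Fintype ι] [DecidableEq ι] [Fintype κ] [DecidableEq κ]

lemma topSum_le_iff {x : ι → ℝ} {k : ℕ} {a : ℝ} :
    topSum x k ≤ a ↔ ∀ s : Finset ι, s.card ≤ k → ∑ i ∈ s, x i ≤ a := by
  simp [topSum]

lemma sum_le_topSum (x : ι → ℝ) (s : Finset ι) : ∑ i ∈ s, x i ≤ topSum x s.card :=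
  topSum_le_iff.mp le_rfl s le_rfl

lemma topSum_comp_equiv (x : ι → ℝ) (e : κ ≃ ι) (k : ℕ) : topSum (x ∘ e) k = topSum x k :=
  eq_of_forall_ge_iff fun a => by
    simp only [topSum_le_iff]
    exact e.finsetCongr.forall_congr fun s => by simp

lemma topSum_card_le_sum {w : ι → ℝ} (hw : ∀ i, 0 ≤ w i) {s : Finset ι}
    (hs : ∀ i ∈ s, ∀ j ∉ s, w j ≤ w i) : topSum w s.card ≤ ∑ i ∈ s, w i := by
  refine topSum_le_iff.mpr fun u hu => ?_
  suffices hdiff : ∑ i ∈ u \ s, w i ≤ ∑ i ∈ s \ u, w i by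
    rw [← Finset.sum_inter_add_sum_sdiff u s, ← Finset.sum_inter_add_sum_sdiff s u,
      Finset.inter_comm]
    gcongr
  rcases (u \ s).eq_empty_or_nonempty with hempty | hnonempty
  · simpa [hempty] using Finset.sum_nonneg fun i _ => hw i
  obtain ⟨m, hm, hmax⟩ := Finset.exists_max_image (u \ s) w hnonempty
  have hcard : (u \ s).card ≤ (s \ u).card := by
    have hu' := Finset.card_inter_add_card_sdiff u s
    have hs' := Finset.card_inter_add_card_sdiff s u
    rw [Finset.inter_comm] at hs'
    omega
  calc ∑ i ∈ u \ s, w i ≤ (u \ s).card • w m := Finset.sum_le_card_nsmul _ _ _ hmax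
    _ ≤ (s \ u).card • w m := nsmul_le_nsmul_left (hw m) hcard
    _ ≤ ∑ i ∈ s \ u, w i := Finset.card_nsmul_le_sum _ _ _ fun i hi =>
      hs i (Finset.mem_sdiff.mp hi).1 m (Finset.mem_sdiff.mp hm).2

end TopSum

section Majorization

variable {ι κ : Type*} [Fintype ι] [DecidableEq ι] [Fintype κ] [DecidableEq κ]

lemma pMaj_comp_equiv_right {μ : Type*} [Fintype μ] [DecidableEq μ] {v : μ → ℝ} {w : ι → ℝ}
    (e : κ ≃ ι) : PMaj v (w ∘ e) ↔ PMaj v w := by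
  simp only [PMaj, topSum_comp_equiv, Function.comp_apply, e.sum_comp]

lemma pMaj_comp_equiv (w : ι → ℝ) (e : κ ≃ ι) : PMaj (w ∘ e) w :=
  (pMaj_comp_equiv_right e).mp ⟨fun _ => le_rfl, rfl⟩

variable {v w : ι → ℝ}

lemma PMaj.sum_le_sum (h : PMaj v w) (hw : ∀ i, 0 ≤ w i) {s : Finset ι}
    (hs : ∀ i ∈ s, ∀ j ∉ s, w j ≤ w i) : ∑ i ∈ s, v i ≤ ∑ i ∈ s, w i :=
  (sum_le_topSum v s).trans ((h.1 _).trans (topSum_card_le_sum hw hs))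

/-- Abel summation, carried out by adding indices to `s` in increasing order of `g`, ties being
broken so that `s` always carries the largest entries of `w`. -/
lemma PMaj.sum_sub_mul_le (h : PMaj v w) (hw : ∀ i, 0 ≤ w i) {g : ι → ℝ} (hg : Antivary g w)
    (s : Finset ι) (hs : ∀ i ∈ s, ∀ j ∉ s, w j ≤ w i) {M : ℝ} (hM : ∀ i ∈ s, g i ≤ M) :
    ∑ i ∈ s, (M - g i) * v i ≤ ∑ i ∈ s, (M - g i) * w i := by
  induction s using Finset.induction_on_max_value (fun i => toLex (g i, -w i))
    generalizing M with
  | empty => simp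
  | insert a s has hmax ih =>
    have hle : ∀ i ∈ s, g i ≤ g a ∧ w a ≤ w i := fun i hi => by
      rcases Prod.Lex.toLex_le_toLex.mp (hmax i hi) with hlt | ⟨heq, hneg⟩
      · exact ⟨hlt.le, le_of_not_gt fun hwlt => (hg hwlt).not_gt hlt⟩
      · exact ⟨heq.le, neg_le_neg_iff.mp hneg⟩
    have hs' : ∀ i ∈ s, ∀ j ∉ s, w j ≤ w i := fun i hi j hj => by
      rcases eq_or_ne j a with rfl | hja
      · exact (hle i hi).2
      · exact hs i (Finset.mem_insert_of_mem hi) j (by simp [hja, hj])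
    have hsplit : ∀ u : ι → ℝ, ∑ i ∈ insert a s, (M - g i) * u i =
        (M - g a) * ∑ i ∈ insert a s, u i + ∑ i ∈ s, (g a - g i) * u i := fun u => by
      rw [Finset.sum_insert has, Finset.sum_insert has, mul_add, Finset.mul_sum, add_assoc,
        ← Finset.sum_add_distrib]
      congr! 2
      ring
    rw [hsplit v, hsplit w]
    exact add_le_add
      (mul_le_mul_of_nonneg_left (h.sum_le_sum hw hs)
        (sub_nonneg.mpr (hM a (Finset.mem_insert_self a s))))
      (ih hs' fun i hi => (hle i hi).1)

lemma PMaj.sum_mul_le_sum_mul (h : PMaj v w) (hw : ∀ i, 0 ≤ w i) {g : ι → ℝ}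
    (hg : Antivary g w) : ∑ i, g i * w i ≤ ∑ i, g i * v i := by
  obtain ⟨M, hM⟩ := (Set.finite_range g).bddAbove
  have key := h.sum_sub_mul_le hw hg Finset.univ (by simp) fun i _ => hM (Set.mem_range_self i)
  simp only [sub_mul, Finset.sum_sub_distrib, ← Finset.mul_sum, h.2] at key
  linarith

end Majorization

section Rearrangement

variable {ι α β : Type*} [Finite ι] [LinearOrder α] [LinearOrder β]

lemma exists_equiv_fin_monotone (v : ι → α) : ∃ e : Fin (Nat.card ι) ≃ ι, Monotone (v ∘ e) :=
  ⟨(Tuple.sort (v ∘ (Finite.equivFin ι).symm)).trans (Finite.equivFin ι).symm,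
    Tuple.monotone_sort (v ∘ (Finite.equivFin ι).symm)⟩

lemma exists_perm_monovary_comp (v : ι → α) (w : ι → β) :
    ∃ σ : Equiv.Perm ι, Monovary v (w ∘ σ) := by
  obtain ⟨e, he⟩ := exists_equiv_fin_monotone v
  obtain ⟨f, hf⟩ := exists_equiv_fin_monotone w
  refine ⟨e.symm.trans f, ?_⟩
  simpa [Function.comp_def] using (he.monovary hf).comp_right e.symm

end Rearrangement

section ElementarySymmetric

lemma sum_prod_powersetCard_succ_insert {ι R : Type*} [DecidableEq ι] [CommSemiring R]
    {s : Finset ι} {a : ι} (ha : a ∉ s) (k : ℕ) (v : ι → R) :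
    ∑ u ∈ Finset.powersetCard (k + 1) (insert a s), ∏ j ∈ u, v j =
      ∑ u ∈ Finset.powersetCard (k + 1) s, ∏ j ∈ u, v j +
        v a * ∑ u ∈ Finset.powersetCard k s, ∏ j ∈ u, v j := by
  have hmem : ∀ {n : ℕ}, ∀ u ∈ Finset.powersetCard n s, a ∉ u := fun u hu hau =>
    ha ((Finset.mem_powersetCard.mp hu).1 hau)
  have hdisj : Disjoint (Finset.powersetCard (k + 1) s)
      ((Finset.powersetCard k s).image (insert a)) :=
    Finset.disjoint_left.mpr fun u hu hu' => by
      obtain ⟨t, -, rfl⟩ := Finset.mem_image.mp hu'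
      exact hmem _ hu (Finset.mem_insert_self a t)
  have hinj : Set.InjOn (insert a) (Finset.powersetCard k s : Set (Finset ι)) :=
    fun t ht u hu htu => by
      rw [← Finset.erase_insert (hmem t ht), htu, Finset.erase_insert (hmem u hu)]
  rw [Finset.powersetCard_succ_insert ha, Finset.sum_union hdisj, Finset.sum_image hinj,
    Finset.mul_sum]
  exact congrArg _ (Finset.sum_congr rfl fun u hu => Finset.prod_insert (hmem u hu))

variable {ι : Type*} [Fintype ι] [DecidableEq ι]

/-- The elementary symmetric polynomial `e_k` of the entries of `v` other than `v i`, which is the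
partial derivative of `e_{k+1}` with respect to `v i`. -/
def esymErase (k : ℕ) (v : ι → ℝ) (i : ι) : ℝ :=
  ∑ s ∈ Finset.powersetCard k (Finset.univ.erase i), ∏ j ∈ s, v j

lemma hasDerivAt_esymFn_succ (k : ℕ) {z : ℝ → ι → ℝ} {z' : ι → ℝ} {a : ℝ}
    (hz : HasDerivAt z z' a) :
    HasDerivAt (fun s => esymFn (k + 1) (z s)) (∑ i, esymErase k (z a) i * z' i) a := by
  refine (HasDerivAt.fun_sum fun s _ =>
    HasDerivAt.fun_finsetProd fun i _ => hasDerivAt_pi.mp hz i).congr_deriv ?_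
  simp only [esymErase, Finset.sum_mul, smul_eq_mul, Finset.sum_sigma']
  refine Finset.sum_bij' (fun p _ => ⟨p.2, p.1.erase p.2⟩) (fun p _ => ⟨insert p.1 p.2, p.1⟩)
    ?_ ?_ ?_ ?_ fun _ _ => rfl
  · rintro ⟨s, i⟩ hs
    simp_all [Finset.mem_powersetCard, Finset.erase_subset_erase]
  · rintro ⟨i, s⟩ hs
    have his : i ∉ s := by
      simp_all [Finset.mem_powersetCard, Finset.subset_erase]
    simp_all [Finset.mem_powersetCard]
  · rintro ⟨s, i⟩ hs
    simp_all [Finset.mem_powersetCard]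
  · rintro ⟨i, s⟩ hs
    have his : i ∉ s := by
      simp_all [Finset.mem_powersetCard, Finset.subset_erase]
    simp_all

lemma antivary_esymErase (k : ℕ) {v : ι → ℝ} (hv : ∀ i, 0 ≤ v i) :
    Antivary (esymErase k v) v := by
  intro i j hij
  cases k with
  | zero => simp [esymErase]
  | succ k =>
    have hne : i ≠ j := ne_of_apply_ne v hij.ne
    have hi : Finset.univ.erase i = insert j ((Finset.univ.erase i).erase j) :=
      (Finset.insert_erase (by simp [hne.symm])).symm
    have hj : Finset.univ.erase j = insert i ((Finset.univ.erase i).erase j) := by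
      rw [Finset.erase_right_comm, Finset.insert_erase (by simp [hne])]
    rw [esymErase, esymErase, hi, hj, sum_prod_powersetCard_succ_insert (by simp),
      sum_prod_powersetCard_succ_insert (by simp)]
    have hnonneg : 0 ≤ ∑ u ∈ Finset.powersetCard k ((Finset.univ.erase i).erase j),
        ∏ l ∈ u, v l :=
      Finset.sum_nonneg fun u _ => Finset.prod_nonneg fun l _ => hv l
    gcongr

lemma esymFn_comp_equiv {κ : Type*} [Fintype κ] [DecidableEq κ] (k : ℕ) (v : ι → ℝ)
    (e : κ ≃ ι) : esymFn k (v ∘ e) = esymFn k v :=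
  Finset.sum_equiv e.finsetCongr (by simp) (by simp)

lemma esymFn_pos {k : ℕ} (hk : k ≤ Fintype.card ι) {v : ι → ℝ} (hv : ∀ i, 0 < v i) :
    0 < esymFn k v :=
  Finset.sum_pos (fun _ _ => Finset.prod_pos fun i _ => hv i)
    (Finset.powersetCard_nonempty.mpr hk)

lemma esymFn_card (v : ι → ℝ) : esymFn (Fintype.card ι) v = ∏ i, v i := by
  rw [esymFn, ← Finset.card_univ, Finset.powersetCard_self, Finset.sum_singleton]

lemma esymFn_card_sub_one [Nonempty ι] {v : ι → ℝ} (hv : ∀ i, v i ≠ 0) :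
    esymFn (Fintype.card ι - 1) v = esymFn (Fintype.card ι) v * ∑ i, (v i)⁻¹ := by
  rw [esymFn_card, Finset.mul_sum, esymFn]
  symm
  refine Finset.sum_bij (fun i _ => Finset.univ.erase i) (fun i _ => ?_)
    (fun i _ j _ h => (Finset.erase_inj _ (Finset.mem_univ i)).mp h) (fun s hs => ?_)
    (fun i _ => ?_)
  · simp [Finset.mem_powersetCard, Finset.card_erase_of_mem]
  · have hcard : sᶜ.card = 1 := by
      rw [Finset.card_compl, (Finset.mem_powersetCard.mp hs).2,
        Nat.sub_sub_self Fintype.card_pos]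
    obtain ⟨i, hi⟩ := Finset.card_eq_one.mp hcard
    exact ⟨i, Finset.mem_univ i, by rw [← Finset.compl_singleton, ← hi, compl_compl]⟩
  · rw [← Finset.mul_prod_erase _ v (Finset.mem_univ i), mul_comm,
      inv_mul_cancel_left₀ (hv i)]

end ElementarySymmetric

section SchurConcavity

variable {ι : Type*} [Fintype ι] [DecidableEq ι] {v w : ι → ℝ}

lemma PMaj.esymFn_le_of_monovary (h : PMaj v w) (hv : ∀ i, 0 ≤ v i) (hw : ∀ i, 0 ≤ w i)
    (hvw : Monovary v w) (k : ℕ) : esymFn k w ≤ esymFn k v := by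
  cases k with
  | zero => simp [esymFn]
  | succ k =>
    let z : ℝ → ι → ℝ := AffineMap.lineMap w v
    have hz_apply : ∀ s i, z s i = (1 - s) * w i + s * v i := fun s i => by
      simp [z, AffineMap.lineMap_apply_module]
    have hder : ∀ s, HasDerivAt (fun s => esymFn (k + 1) (z s))
        (∑ i, esymErase k (z s) i * (v - w) i) s :=
      fun s => hasDerivAt_esymFn_succ k AffineMap.hasDerivAt_lineMap
    have hder_nonneg : ∀ s ∈ Set.Ioo (0 : ℝ) 1,
        0 ≤ ∑ i, esymErase k (z s) i * (v - w) i := fun s hs => by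
      have hs' : 0 < 1 - s := sub_pos.mpr hs.2
      have hz_nonneg : ∀ i, 0 ≤ z s i := fun i => by
        rw [hz_apply]
        exact add_nonneg (mul_nonneg hs'.le (hw i)) (mul_nonneg hs.1.le (hv i))
      have hz_lt : ∀ {i j}, w i < w j → z s i < z s j := fun hij => by
        rw [hz_apply, hz_apply]
        exact add_lt_add_of_lt_of_le (mul_lt_mul_of_pos_left hij hs')
          (mul_le_mul_of_nonneg_left (hvw hij) hs.1.le)
      have hanti : Antivary (esymErase k (z s)) w := fun i j hij =>
        antivary_esymErase k hz_nonneg (hz_lt hij)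
      simpa [mul_sub] using h.sum_mul_le_sum_mul hw hanti
    have hmono : MonotoneOn (fun s => esymFn (k + 1) (z s)) (Set.Icc 0 1) :=
      monotoneOn_of_hasDerivWithinAt_nonneg (convex_Icc 0 1)
        (fun s _ => (hder s).continuousAt.continuousWithinAt)
        (fun s _ => (hder s).hasDerivWithinAt) (by simpa only [interior_Icc] using hder_nonneg)
    simpa [z] using hmono (Set.left_mem_Icc.mpr zero_le_one)
      (Set.right_mem_Icc.mpr zero_le_one) zero_le_one

lemma PMaj.esymFn_le (h : PMaj v w) (hv : ∀ i, 0 ≤ v i) (hw : ∀ i, 0 ≤ w i) (k : ℕ) :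
    esymFn k w ≤ esymFn k v := by
  obtain ⟨σ, hσ⟩ := exists_perm_monovary_comp v w
  rw [← esymFn_comp_equiv k w σ]
  exact ((pMaj_comp_equiv_right σ).mpr h).esymFn_le_of_monovary hv (fun i => hw (σ i)) hσ k

lemma PMaj.prod_lt_of_monovary (h : PMaj v w) (hv : ∀ i, 0 < v i) (hw : ∀ i, 0 < w i)
    (hvw : Monovary v w) (hne : v ≠ w) : ∏ i, w i < ∏ i, v i := by
  have hsum : ∑ i, (w i / v i - 1) ≤ 0 := by
    have hanti : Antivary v⁻¹ w := (antivary_inv_left₀ (f := v) hv).mpr hvw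
    have hle := h.sum_mul_le_sum_mul (fun i => (hw i).le) hanti
    have hself : ∀ i, v⁻¹ i * v i = 1 := fun i => inv_mul_cancel₀ (hv i).ne'
    simp only [hself] at hle
    simpa [div_eq_inv_mul] using hle
  have hexp : ∀ i, w i / v i ≤ Real.exp (w i / v i - 1) := fun i => by
    simpa using Real.add_one_le_exp (w i / v i - 1)
  obtain ⟨j, hj⟩ := Function.ne_iff.mp hne
  have hexp_lt : w j / v j < Real.exp (w j / v j - 1) := by
    simpa using Real.add_one_lt_exp (sub_ne_zero.mpr fun hdiv =>
      hj ((div_eq_one_iff_eq (hv j).ne').mp hdiv).symm)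
  have hprod : ∏ i, w i / v i < 1 :=
    calc ∏ i, w i / v i < ∏ i, Real.exp (w i / v i - 1) :=
          Finset.prod_lt_prod (fun i _ => div_pos (hw i) (hv i)) (fun i _ => hexp i)
            ⟨j, Finset.mem_univ j, hexp_lt⟩
      _ = Real.exp (∑ i, (w i / v i - 1)) := (Real.exp_sum _ _).symm
      _ ≤ 1 := Real.exp_le_one_iff.mpr hsum
  rwa [Finset.prod_div_distrib, div_lt_one (Finset.prod_pos fun i _ => hv i)] at hprod

lemma PMaj.prod_lt (h : PMaj v w) (hv : ∀ i, 0 < v i) (hw : ∀ i, 0 < w i)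
    (hne : ∀ σ : Equiv.Perm ι, v ≠ w ∘ σ) : ∏ i, w i < ∏ i, v i := by
  obtain ⟨σ, hσ⟩ := exists_perm_monovary_comp v w
  rw [← Equiv.prod_comp σ w]
  exact ((pMaj_comp_equiv_right σ).mpr h).prod_lt_of_monovary hv (fun i => hw (σ i)) hσ (hne σ)

end SchurConcavity

section PowerSums

variable {ι κ R : Type*} [Fintype ι] [Fintype κ]

lemma sum_eval_eq_of_sum_pow_eq [CommSemiring R] {x : ι → R} {y : κ → R}
    (h : ∀ n : ℕ, ∑ i, x i ^ n = ∑ j, y j ^ n) (p : Polynomial R) :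
    ∑ i, p.eval (x i) = ∑ j, p.eval (y j) := by
  simp only [Polynomial.eval_eq_sum_range]
  rw [Finset.sum_comm, Finset.sum_comm (s := Finset.univ)]
  simp only [← Finset.mul_sum, h]

/-- Evaluating at the entries a polynomial that vanishes at all of them except `c` recovers the
multiplicity of `c`. -/
lemma exists_equiv_of_sum_pow_eq [CommRing R] [IsDomain R] [CharZero R] {x : ι → R} {y : κ → R}
    (h : ∀ n : ℕ, ∑ i, x i ^ n = ∑ j, y j ^ n) : ∃ e : ι ≃ κ, x = y ∘ e := by
  classical
  have hcard : ∀ c, Fintype.card {i // x i = c} = Fintype.card {j // y j = c} := by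
    intro c
    let p := Lagrange.nodal ((Finset.univ.image x ∪ Finset.univ.image y).erase c) id
    have hpc : p.eval c ≠ 0 := Lagrange.eval_nodal_not_at_node fun a ha =>
      (Finset.ne_of_mem_erase ha).symm
    have hpx : ∀ i, p.eval (x i) = if x i = c then p.eval c else 0 := fun i => by
      split_ifs with hi
      · rw [hi]
      · exact Lagrange.eval_nodal_at_node (v := id) (by simp [hi])
    have hpy : ∀ j, p.eval (y j) = if y j = c then p.eval c else 0 := fun j => by
      split_ifs with hj
      · rw [hj]
      · exact Lagrange.eval_nodal_at_node (v := id) (by simp [hj])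
    have hsum := sum_eval_eq_of_sum_pow_eq h p
    simp only [hpx, hpy, ← Finset.sum_filter, Finset.sum_const, nsmul_eq_mul] at hsum
    simpa only [Fintype.card_subtype, Nat.cast_inj] using mul_right_cancel₀ hpc hsum
  exact ⟨Equiv.ofFiberEquiv fun c => Fintype.equivOfCardEq (hcard c),
    funext fun i => (Equiv.ofFiberEquiv_map _ i).symm⟩

end PowerSums

section Tensor

variable {ι κ : Type*} [Fintype ι] [Fintype κ]

lemma sum_pvTensor_pow (x : ι → ℝ) (t : κ → ℝ) (n : ℕ) :
    ∑ p, pvTensor x t p ^ n = (∑ i, x i ^ n) * ∑ j, t j ^ n := by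
  simp only [Fintype.sum_prod_type, Finset.sum_mul_sum, pvTensor, mul_pow]

lemma sum_inv_pvTensor (x : ι → ℝ) (t : κ → ℝ) :
    ∑ p, (pvTensor x t p)⁻¹ = (∑ i, (x i)⁻¹) * ∑ j, (t j)⁻¹ := by
  simp only [Fintype.sum_prod_type, Finset.sum_mul_sum, pvTensor, mul_inv]

lemma exists_perm_of_pvTensor_perm {ι κ : Type*} [Finite ι] [Finite κ] [Nonempty κ]
    {x y : ι → ℝ} {t : κ → ℝ} (ht : ∀ j, 0 < t j) {σ : Equiv.Perm (ι × κ)}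
    (h : pvTensor x t = pvTensor y t ∘ σ) : ∃ τ : Equiv.Perm ι, x = y ∘ τ := by
  cases nonempty_fintype ι
  cases nonempty_fintype κ
  refine exists_equiv_of_sum_pow_eq fun n => ?_
  have hpos : 0 < ∑ j, t j ^ n :=
    Finset.sum_pos (fun j _ => pow_pos (ht j) n) Finset.univ_nonempty
  refine mul_right_cancel₀ hpos.ne' ?_
  rw [← sum_pvTensor_pow, ← sum_pvTensor_pow, h]
  exact Equiv.sum_comp σ fun p => pvTensor y t p ^ n

variable [DecidableEq ι] [DecidableEq κ]

lemma esymFn_card_pvTensor (x : ι → ℝ) (t : κ → ℝ) :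
    esymFn (Fintype.card (ι × κ)) (pvTensor x t) =
      esymFn (Fintype.card ι) x ^ Fintype.card κ *
        esymFn (Fintype.card κ) t ^ Fintype.card ι := by
  simp only [esymFn_card, Fintype.prod_prod_type, pvTensor, Finset.prod_mul_distrib,
    Finset.prod_const, Finset.prod_pow, Finset.card_univ]

lemma esymFn_card_sub_one_pvTensor [Nonempty ι] [Nonempty κ] {x : ι → ℝ} {t : κ → ℝ}
    (hx : ∀ i, x i ≠ 0) (ht : ∀ j, t j ≠ 0) :
    esymFn (Fintype.card (ι × κ) - 1) (pvTensor x t) =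
      esymFn (Fintype.card ι) x ^ (Fintype.card κ - 1) * esymFn (Fintype.card ι - 1) x *
        (esymFn (Fintype.card κ) t ^ (Fintype.card ι - 1) *
          esymFn (Fintype.card κ - 1) t) := by
  have hxt : ∀ p, pvTensor x t p ≠ 0 := fun p => mul_ne_zero (hx p.1) (ht p.2)
  rw [esymFn_card_sub_one hxt, esymFn_card_pvTensor, sum_inv_pvTensor, esymFn_card_sub_one hx,
    esymFn_card_sub_one ht,
    ← pow_sub_one_mul (Fintype.card_ne_zero (α := κ)) (esymFn (Fintype.card ι) x),
    ← pow_sub_one_mul (Fintype.card_ne_zero (α := ι)) (esymFn (Fintype.card κ) t)]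
  ring

end Tensor

section Catalysis

variable {ι κ : Type*} [Fintype ι] [DecidableEq ι] [Fintype κ] [DecidableEq κ]
  {x y : ι → ℝ} {t : κ → ℝ}

lemma esymFn_card_lt_of_pMaj_pvTensor [Nonempty κ] (hx : ∀ i, 0 < x i) (hy : ∀ i, 0 < y i)
    (ht : ∀ j, 0 < t j) (hne : ∀ σ : Equiv.Perm ι, x ≠ y ∘ σ)
    (h : PMaj (pvTensor x t) (pvTensor y t)) :
    esymFn (Fintype.card ι) y < esymFn (Fintype.card ι) x := by
  have hlt := h.prod_lt (fun p => mul_pos (hx p.1) (ht p.2)) (fun p => mul_pos (hy p.1) (ht p.2))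
    fun σ hσ => (exists_perm_of_pvTensor_perm ht hσ).elim hne
  rw [← esymFn_card, ← esymFn_card, esymFn_card_pvTensor, esymFn_card_pvTensor] at hlt
  exact lt_of_pow_lt_pow_left₀ _ (esymFn_pos le_rfl hx).le
    (lt_of_mul_lt_mul_right hlt (pow_pos (esymFn_pos le_rfl ht) _).le)

lemma esymFn_card_pow_mul_le_of_pMaj_pvTensor [Nonempty ι] [Nonempty κ] (hx : ∀ i, 0 < x i)
    (hy : ∀ i, 0 < y i) (ht : ∀ j, 0 < t j) (h : PMaj (pvTensor x t) (pvTensor y t)) :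
    esymFn (Fintype.card ι) y ^ (Fintype.card κ - 1) * esymFn (Fintype.card ι - 1) y ≤
      esymFn (Fintype.card ι) x ^ (Fintype.card κ - 1) * esymFn (Fintype.card ι - 1) x := by
  have hle := h.esymFn_le (fun p => (mul_pos (hx p.1) (ht p.2)).le)
    (fun p => (mul_pos (hy p.1) (ht p.2)).le) (Fintype.card (ι × κ) - 1)
  rw [esymFn_card_sub_one_pvTensor (fun i => (hx i).ne') fun j => (ht j).ne',
    esymFn_card_sub_one_pvTensor (fun i => (hy i).ne') fun j => (ht j).ne'] at hle
  exact le_of_mul_le_mul_right hle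
    (mul_pos (pow_pos (esymFn_pos le_rfl ht) _) (esymFn_pos (Nat.sub_le _ 1) ht))

lemma natCast_mul_logb_concFn_sub (b : ℝ) {k : ℕ} (hk : k ≤ Fintype.card ι)
    (hx : ∀ i, 0 < x i) (hy : ∀ i, 0 < y i) :
    k * (Real.logb b (concFn k x) - Real.logb b (concFn k y)) =
      Real.logb b (esymFn k x) - Real.logb b (esymFn k y) := by
  rcases Nat.eq_zero_or_pos k with rfl | hk₀
  · simp [esymFn]
  have hu : 0 < esymFn k (fun _ : ι => 1 / (Fintype.card ι : ℝ)) :=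
    esymFn_pos hk fun i => one_div_pos.mpr (Nat.cast_pos.mpr (Fintype.card_pos_iff.mpr ⟨i⟩))
  have hx' := esymFn_pos hk hx
  have hy' := esymFn_pos hk hy
  rw [concFn, concFn, Real.logb_rpow_eq_mul_logb_of_pos (div_pos hx' hu),
    Real.logb_rpow_eq_mul_logb_of_pos (div_pos hy' hu), Real.logb_div hx'.ne' hu.ne',
    Real.logb_div hy'.ne' hu.ne', ← mul_sub, sub_sub_sub_cancel_right, ← mul_assoc,
    mul_one_div_cancel (by positivity), one_mul]

theorem sanders_gour_bound_general [Nonempty κ] (hx : ∀ i, 0 < x i) (hy : ∀ i, 0 < y i)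
    (ht : ∀ j, 0 < t j) (hne : ∀ σ : Equiv.Perm ι, x ≠ y ∘ σ)
    (hcat : PMaj (pvTensor x t) (pvTensor y t)) :
    Real.logb 2 (concFn (Fintype.card ι) y) < Real.logb 2 (concFn (Fintype.card ι) x) ∧
      1 + ((Fintype.card ι : ℝ) - 1) / Fintype.card ι *
          ((Real.logb 2 (concFn (Fintype.card ι - 1) y) -
              Real.logb 2 (concFn (Fintype.card ι - 1) x)) /
            (Real.logb 2 (concFn (Fintype.card ι) x) -
              Real.logb 2 (concFn (Fintype.card ι) y))) ≤ (Fintype.card κ : ℝ) := by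
  have : Nonempty ι := not_isEmpty_iff.mp fun _ => hne 1 (Subsingleton.elim _ _)
  have hyd := esymFn_pos le_rfl hy
  have hxd := esymFn_pos le_rfl hx
  have hxd' := esymFn_pos (Nat.sub_le _ 1) hx
  have hyd' := esymFn_pos (Nat.sub_le _ 1) hy
  have hlog : Real.logb 2 (esymFn (Fintype.card ι) y) < Real.logb 2 (esymFn (Fintype.card ι) x) :=
    Real.logb_lt_logb one_lt_two hyd (esymFn_card_lt_of_pMaj_pvTensor hx hy ht hne hcat)
  have hlog' := Real.logb_le_logb_of_le one_lt_two
    (mul_pos (pow_pos hyd (Fintype.card κ - 1)) hyd')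
    (esymFn_card_pow_mul_le_of_pMaj_pvTensor hx hy ht hcat)
  rw [Real.logb_mul (pow_pos hyd _).ne' hyd'.ne', Real.logb_mul (pow_pos hxd _).ne' hxd'.ne',
    Real.logb_pow, Real.logb_pow, Nat.cast_pred Fintype.card_pos] at hlog'
  have hconc := natCast_mul_logb_concFn_sub 2 le_rfl hx hy
  have hconc' := natCast_mul_logb_concFn_sub 2 (Nat.sub_le (Fintype.card ι) 1) hy hx
  rw [Nat.cast_pred Fintype.card_pos] at hconc'
  constructor
  · rw [← sub_pos, ← hconc] at hlog
    exact sub_pos.mp (pos_of_mul_pos_right hlog (Nat.cast_nonneg _))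
  · rw [div_mul_div_comm, hconc, hconc', ← le_sub_iff_add_le', div_le_iff₀ (sub_pos.mpr hlog)]
    linarith

end Catalysis

lemma IsProbVec.nonempty {ι : Type*} [Fintype ι] {x : ι → ℝ} (hx : IsProbVec x) : Nonempty ι :=
  not_isEmpty_iff.mp fun _ => by simpa using hx.2

/-- Sanders–Gour lower bound on the number of nonzero Schmidt coefficients of a catalyst,
via generalized concurrences. -/
theorem sanders_gour_bound {d r : ℕ} (x y : Fin d → ℝ) (t : Fin r → ℝ)
    (hx : IsProbVec x) (hy : IsProbVec y) (hxa : Antitone x) (hya : Antitone y)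
    (hxp : ∀ i, 0 < x i) (hyp : ∀ i, 0 < y i)
    (hnm : ¬ PMaj x y)
    (ht : IsProbVec t) (htp : ∀ i, 0 < t i)
    (hcat : PMaj (pvTensor x t) (pvTensor y t)) :
    Real.logb 2 (concFn d y) < Real.logb 2 (concFn d x) ∧
      1 + ((d : ℝ) - 1) / d *
          ((Real.logb 2 (concFn (d - 1) y) - Real.logb 2 (concFn (d - 1) x)) /
            (Real.logb 2 (concFn d x) - Real.logb 2 (concFn d y))) ≤ (r : ℝ) := by
  have : Nonempty (Fin r) := ht.nonempty
  simpa only [Fintype.card_fin] using sanders_gour_bound_general hxp hyp htp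
    (fun σ hσ => hnm (hσ ▸ pMaj_comp_equiv y σ)) hcat
end
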